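/- arXiv:2109.01371 — 2 statements merged into one kernel-verified Lean document; each statement's English description precedes it below -/
import Mathlib

section
/- Let 𝔄 and 𝔅 be relational structures with domain {0,1,2} (each given by an arbitrary family of finitary relations on {0,1,2}) such that Pol({0,1,2}; C_3, R^=_3) ⊆ Pol(𝔄) ⊆ Pol({0,1,2}; C_3, B_2) and Pol({0,1,2}; C_3, R^=_3) ⊆ Pol(𝔅) ⊆ Pol({0,1,2}; C_3, B_2). If there exists a clone homomorphism from Pol(𝔅) to Pol(𝔄), then Pol(𝔅) ⊆ Pol(𝔄). -/
/-- The three-element domain `{0,1,2}`. -/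
abbrev D3 : Type := Fin 3

/-- `n`-ary operations on `{0,1,2}`. -/
abbrev Op (n : ℕ) : Type := (Fin n → D3) → D3

/-- An `n`-ary operation `f` preserves a `k`-ary relation `R`. -/
def Preserves {n k : ℕ} (f : Op n) (R : Set (Fin k → D3)) : Prop :=
  ∀ t : Fin n → (Fin k → D3), (∀ i, t i ∈ R) → (fun j => f fun i => t i j) ∈ R

/-- `C₃ = {(0,1),(1,2),(2,0)}`. -/
def C3rel : Set (Fin 2 → D3) :=
  { t | (t 0 = 0 ∧ t 1 = 1) ∨ (t 0 = 1 ∧ t 1 = 2) ∨ (t 0 = 2 ∧ t 1 = 0) }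

/-- `R⁼₃ = {(x,y,z) : x ∈ {0,1} ∧ (x = 0 → y = z)}`. -/
def Req3rel : Set (Fin 3 → D3) :=
  { t | (t 0 = 0 ∨ t 0 = 1) ∧ (t 0 = 0 → t 1 = t 2) }

/-- `B₂ = {(1,0),(0,1),(1,1)}`. -/
def B2rel : Set (Fin 2 → D3) :=
  { t | (t 0 = 1 ∧ t 1 = 0) ∨ (t 0 = 0 ∧ t 1 = 1) ∨ (t 0 = 1 ∧ t 1 = 1) }

/-- The polymorphism clone of a relational structure on `{0,1,2}` given by an
arbitrary family of finitary relations (each relation packaged with its arity). -/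
def Pol (A : Set (Σ k : ℕ, Set (Fin k → D3))) : ∀ n, Set (Op n) :=
  fun n => { f | ∀ R ∈ A, Preserves f R.2 }

/-- `ξ` is a clone homomorphism from `C` to `D`: it is arity-preserving, maps `C` into `D`,
fixes the projections and commutes with composition. -/
def IsCloneHom (C D : ∀ n, Set (Op n)) (ξ : ∀ n, Op n → Op n) : Prop :=
  (∀ n, ∀ f ∈ C n, ξ n f ∈ D n) ∧
  (∀ (n : ℕ) (i : Fin n), ξ n (fun x => x i) = fun x => x i) ∧
  (∀ (n m : ℕ) (f : Op n) (g : Fin n → Op m), f ∈ C n → (∀ i, g i ∈ C m) →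
    ξ m (fun x => f fun i => g i x) = fun x => ξ n f fun i => ξ m (g i) x)

/-!
Write `rps` for the rock-paper-scissors operation, in which `a + 1` beats `a`. It is the only
commutative binary polymorphism of `C₃` and `B₂`, so a clone homomorphism into `Pol(𝔄)` fixes it,
and hence fixes every `rps`-term. To reach an arbitrary operation `f` and a point `a`, substitute for
the `i`-th argument a ternary `rps`-term that takes the value `a i` at `(0,1,2)` and the value of the
winner at every tuple with a repeated entry. By idempotence the composite also returns the winner at
such tuples. There are only nine equivariant ternary operations with this property and all of them
are `rps`-terms, so the composite is fixed; evaluating at `(0,1,2)` shows that `f` is fixed at `a`.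
-/

/-- The rock-paper-scissors operation: the winner of `a` and `b` when `a + 1` beats `a`. -/
def rps (a b : D3) : D3 := if b = a + 1 then b else a

/-- `rps` as an element of `Op 2`, for use with `Preserves` and `Pol`. -/
def rpsOp : Op 2 := fun x => rps (x 0) (x 1)

lemma rps_self (a : D3) : rps a a = a := by
  revert a; decide

lemma rps_comm (a b : D3) : rps a b = rps b a := by
  revert a b; decide

lemma rps_add_one_right (a : D3) : rps a (a + 1) = a + 1 := if_pos rfl

lemma rps_add_one_add_one (a b : D3) : rps (a + 1) (b + 1) = rps a b + 1 := by
  revert a b; decide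

lemma eq_or_eq_add_one_or_eq_add_one (a b : D3) : b = a ∨ b = a + 1 ∨ a = b + 1 := by
  revert a b; decide

lemma eq_vecCons_fin_two {α : Type*} (x : Fin 2 → α) : x = ![x 0, x 1] :=
  (FinVec.etaExpand_eq x).symm

section Preservation

variable {n m k : ℕ} {f : Op n}

lemma Preserves.comp {R : Set (Fin k → D3)} {g : Fin n → Op m} (hf : Preserves f R)
    (hg : ∀ i, Preserves (g i) R) : Preserves (fun x => f fun i => g i x) R :=
  fun t ht => hf (fun i j => g i fun l => t l j) fun i => hg i t ht

lemma mem_C3rel {t : Fin 2 → D3} : t ∈ C3rel ↔ t 1 = t 0 + 1 := by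
  simp only [C3rel, Set.mem_ofPred_eq]
  generalize t 0 = a
  generalize t 1 = b
  revert a b; decide

lemma preserves_C3rel_iff : Preserves f C3rel ↔ ∀ x, f (fun i => x i + 1) = f x + 1 := by
  refine ⟨fun h x => ?_, fun h t ht => ?_⟩
  · exact mem_C3rel.1 (h (fun i => ![x i, x i + 1]) fun i => mem_C3rel.2 rfl)
  · rw [mem_C3rel, ← h]
    exact congrArg f (funext fun i => mem_C3rel.1 (ht i))

lemma Preserves.apply_add (hf : Preserves f C3rel) (x : Fin n → D3) (c : D3) :
    f (fun i => x i + c) = f x + c := by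
  induction c using Fin.induction with
  | zero => simp only [add_zero]
  | succ c ih =>
    rw [← Fin.coeSucc_eq_succ, ← add_assoc, ← ih, ← preserves_C3rel_iff.1 hf]
    simp only [add_assoc]

lemma eq_one_of_mem_B2rel {t : Fin 2 → D3} (ht : t ∈ B2rel) (h : t 0 = t 1) : t 0 = 1 := by
  rcases ht with ⟨h0, -⟩ | ⟨h0, h1⟩ | ⟨h0, -⟩
  · exact h0
  · exact absurd (h0.symm.trans (h.trans h1)) (by decide)
  · exact h0

lemma Preserves.apply_const (hC : Preserves f C3rel) (hB : Preserves f B2rel) (c : D3) :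
    f (fun _ => c) = c := by
  have apply_one : f (fun _ => 1) = 1 :=
    eq_one_of_mem_B2rel (hB (fun _ _ => 1) fun _ => Or.inr (Or.inr ⟨rfl, rfl⟩)) rfl
  have h := hC.apply_add (fun _ => 1) (c - 1)
  rwa [apply_one, add_sub_cancel] at h

lemma preserves_rpsOp_C3rel : Preserves rpsOp C3rel :=
  preserves_C3rel_iff.2 fun x => rps_add_one_add_one (x 0) (x 1)

lemma preserves_rpsOp_Req3rel : Preserves rpsOp Req3rel := by
  have first_coord : ∀ a b : D3, (a = 0 ∨ a = 1) → (b = 0 ∨ b = 1) →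
      (rps a b = 0 ∨ rps a b = 1) ∧ (rps a b = 0 → a = 0 ∧ b = 0) := by decide
  intro t ht
  obtain ⟨mem, eq_zero⟩ := first_coord _ _ (ht 0).1 (ht 1).1
  refine ⟨mem, fun h => ?_⟩
  exact congrArg₂ rps ((ht 0).2 (eq_zero h).1) ((ht 1).2 (eq_zero h).2)

lemma eq_rpsOp_of_comm {f : Op 2} (hC : Preserves f C3rel) (hB : Preserves f B2rel)
    (hcomm : ∀ a b, f ![a, b] = f ![b, a]) : f = rpsOp := by
  have apply_zero_one : f ![0, 1] = 1 := by
    let t : Fin 2 → Fin 2 → D3 := ![![0, 1], ![1, 0]]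
    have column_zero : (fun i => t i 0) = ![0, 1] := eq_vecCons_fin_two _
    have column_one : (fun i => t i 1) = ![1, 0] := eq_vecCons_fin_two _
    have mem : (fun j => f fun i => t i j) ∈ B2rel :=
      hB t (Fin.forall_fin_two.2 ⟨Or.inr (Or.inl ⟨rfl, rfl⟩), Or.inl ⟨rfl, rfl⟩⟩)
    rw [← column_zero]
    exact eq_one_of_mem_B2rel mem (by rw [column_zero, column_one, hcomm])
  have apply_succ (a : D3) : f ![a, a + 1] = a + 1 := by
    have h := hC.apply_add ![0, 1] a
    rw [apply_zero_one, add_comm 1 a, eq_vecCons_fin_two fun i => ![0, 1] i + a] at h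
    simpa only [Matrix.cons_val_zero, Matrix.cons_val_one, zero_add, add_comm 1 a] using h
  have apply_self (a : D3) : f ![a, a] = a :=
    (congrArg f (eq_vecCons_fin_two fun _ => a)).symm.trans (hC.apply_const hB a)
  have apply_pair (a b : D3) : f ![a, b] = rps a b := by
    rcases eq_or_eq_add_one_or_eq_add_one a b with rfl | rfl | rfl
    · rw [apply_self, rps_self]
    · rw [apply_succ, rps_add_one_right]
    · rw [hcomm, apply_succ, rps_comm, rps_add_one_right]
  funext x
  rw [eq_vecCons_fin_two x]
  exact apply_pair (x 0) (x 1)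

end Preservation

/-- The clone generated by `rps`, presented as the operations computed by `rps`-terms. -/
inductive IsRPSTerm {n : ℕ} : Op n → Prop
  | proj (i : Fin n) : IsRPSTerm fun x => x i
  | rps {f g : Op n} : IsRPSTerm f → IsRPSTerm g → IsRPSTerm fun x => rps (f x) (g x)

/-- Equivariant ternary operations that return the winner at every tuple with a repeated entry.
There the winner is well defined, so the bracketing of the right-hand side is immaterial. -/
structure IsTernaryRPS (t : Op 3) : Prop where
  preserves_C3rel : Preserves t C3rel
  apply_of_not_injective :
    ∀ x, ¬ Function.Injective x → t x = rps (rps (x 0) (x 1)) (x 2)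

/-- The game in which the `i`-th entry plays against the winner of the other two. On three distinct
entries the `i`-th one wins. -/
def challenge (i : Fin 3) : Op 3 := fun x => rps (rps (x (i + 1)) (x (i + 2))) (x i)

lemma isRPSTerm_challenge (i : Fin 3) : IsRPSTerm (challenge i) :=
  .rps (.rps (.proj _) (.proj _)) (.proj _)

lemma isTernaryRPS_challenge (i : Fin 3) : IsTernaryRPS (challenge i) where
  preserves_C3rel := preserves_C3rel_iff.2 fun x => by
    simp only [challenge, rps_add_one_add_one]
  apply_of_not_injective := by
    revert i; unfold challenge; decide

namespace IsTernaryRPS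

lemma comp {n : ℕ} {f : Op n} {t : Fin n → Op 3} (hf : Preserves f C3rel)
    (hid : ∀ c, f (fun _ => c) = c) (ht : ∀ i, IsTernaryRPS (t i)) :
    IsTernaryRPS fun x => f fun i => t i x where
  preserves_C3rel := hf.comp fun i => (ht i).preserves_C3rel
  apply_of_not_injective x hx := by
    simp only [(ht _).apply_of_not_injective x hx, hid]

lemma comp_rps {t u : Op 3} (ht : IsTernaryRPS t) (hu : IsTernaryRPS u) :
    IsTernaryRPS fun x => rps (t x) (u x) :=
  comp (t := ![t, u]) preserves_rpsOp_C3rel rps_self (Fin.forall_fin_two.2 ⟨ht, hu⟩)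

lemma eq_of_apply_eq {t u : Op 3} (ht : IsTernaryRPS t) (hu : IsTernaryRPS u)
    (h₁ : t ![0, 1, 2] = u ![0, 1, 2]) (h₂ : t ![0, 2, 1] = u ![0, 2, 1]) : t = u := by
  have translate : ∀ x : Fin 3 → D3, Function.Injective x →
      ∃ c, x = (fun i => ![0, 1, 2] i + c) ∨ x = fun i => ![0, 2, 1] i + c := by decide
  funext x
  by_cases hx : Function.Injective x
  · obtain ⟨c, rfl | rfl⟩ := translate x hx
    · rw [ht.preserves_C3rel.apply_add, hu.preserves_C3rel.apply_add, h₁]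
    · rw [ht.preserves_C3rel.apply_add, hu.preserves_C3rel.apply_add, h₂]
  · rw [ht.apply_of_not_injective x hx, hu.apply_of_not_injective x hx]

lemma exists_isRPSTerm (p q : D3) :
    ∃ t : Op 3, IsTernaryRPS t ∧ IsRPSTerm t ∧ t ![0, 1, 2] = p ∧ t ![0, 2, 1] = q := by
  let Realized (p q : D3) : Prop :=
    ∃ t : Op 3, IsTernaryRPS t ∧ IsRPSTerm t ∧ t ![0, 1, 2] = p ∧ t ![0, 2, 1] = q
  have challenge_realized (i : Fin 3) :
      Realized (challenge i ![0, 1, 2]) (challenge i ![0, 2, 1]) :=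
    ⟨_, isTernaryRPS_challenge i, isRPSTerm_challenge i, rfl, rfl⟩
  have rps_realized {p q p' q' : D3} :
      Realized p q → Realized p' q' → Realized (rps p p') (rps q q') := by
    rintro ⟨t, ht, htt, rfl, rfl⟩ ⟨u, hu, hut, rfl, rfl⟩
    exact ⟨_, ht.comp_rps hu, htt.rps hut, rfl, rfl⟩
  have h00 : Realized 0 0 := challenge_realized 0
  have h12 : Realized 1 2 := challenge_realized 1
  have h21 : Realized 2 1 := challenge_realized 2
  have h10 : Realized 1 0 := rps_realized h00 h12
  have h22 : Realized 2 2 := rps_realized h12 h21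
  have h01 : Realized 0 1 := rps_realized h21 h00
  have h20 : Realized 2 0 := rps_realized h10 h22
  have h02 : Realized 0 2 := rps_realized h22 h01
  have h11 : Realized 1 1 := rps_realized h01 h10
  change Realized p q
  fin_cases p <;> fin_cases q <;> assumption

lemma isRPSTerm {t : Op 3} (ht : IsTernaryRPS t) : IsRPSTerm t := by
  obtain ⟨u, hu, huterm, h₁, h₂⟩ := exists_isRPSTerm (t ![0, 1, 2]) (t ![0, 2, 1])
  exact hu.eq_of_apply_eq ht h₁ h₂ ▸ huterm

end IsTernaryRPS

section CloneHomomorphisms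

/-- `C` is a clone on `{0,1,2}`: it contains the projections and is closed under composition. -/
structure IsClone (C : ∀ n, Set (Op n)) : Prop where
  proj_mem : ∀ {n : ℕ} (i : Fin n), (fun x => x i) ∈ C n
  comp_mem : ∀ {n m : ℕ} {f : Op n} {g : Fin n → Op m}, f ∈ C n → (∀ i, g i ∈ C m) →
    (fun x => f fun i => g i x) ∈ C m

lemma isClone_Pol (A : Set (Σ k : ℕ, Set (Fin k → D3))) : IsClone (Pol A) where
  proj_mem i _ _ _ ht := ht i
  comp_mem hf hg R hR := (hf R hR).comp fun i => hg i R hR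

lemma mem_Pol_pair {R S : Σ k : ℕ, Set (Fin k → D3)} {n : ℕ} {f : Op n} :
    f ∈ Pol {R, S} n ↔ Preserves f R.2 ∧ Preserves f S.2 := by
  simp only [Pol, Set.mem_insert_iff, Set.mem_singleton_iff, Set.mem_ofPred_eq, forall_eq_or_imp,
    forall_eq]

lemma rpsOp_mem_Pol : rpsOp ∈ Pol {⟨2, C3rel⟩, ⟨3, Req3rel⟩} 2 :=
  mem_Pol_pair.2 ⟨preserves_rpsOp_C3rel, preserves_rpsOp_Req3rel⟩

variable {C D : ∀ n, Set (Op n)} {ξ : ∀ n, Op n → Op n}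

lemma IsRPSTerm.mem (hC : IsClone C) (hrps : rpsOp ∈ C 2) {n : ℕ} {t : Op n}
    (ht : IsRPSTerm t) : t ∈ C n := by
  induction ht with
  | proj i => exact hC.proj_mem i
  | @rps f g _ _ hf hg => exact hC.comp_mem (g := ![f, g]) hrps (Fin.forall_fin_two.2 ⟨hf, hg⟩)

lemma IsCloneHom.map_rps (hξ : IsCloneHom C D ξ) (hrps : rpsOp ∈ C 2) {n : ℕ} {f g : Op n}
    (hf : f ∈ C n) (hg : g ∈ C n) :
    ξ n (fun x => rps (f x) (g x)) = fun x => ξ 2 rpsOp ![ξ n f x, ξ n g x] := by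
  have h := hξ.2.2 2 n rpsOp ![f, g] hrps (Fin.forall_fin_two.2 ⟨hf, hg⟩)
  exact h.trans (funext fun x => congrArg (ξ 2 rpsOp) (eq_vecCons_fin_two _))

lemma IsCloneHom.map_rpsOp (hξ : IsCloneHom C D ξ) (hC : IsClone C) (hrps : rpsOp ∈ C 2)
    (hD : D 2 ⊆ Pol {⟨2, C3rel⟩, ⟨2, B2rel⟩} 2) : ξ 2 rpsOp = rpsOp := by
  obtain ⟨preserves_C3, preserves_B2⟩ := mem_Pol_pair.1 (hD (hξ.1 2 rpsOp hrps))
  refine eq_rpsOp_of_comm preserves_C3 preserves_B2 fun a b => ?_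
  have map_rps_proj (i j : Fin 2) (x : Fin 2 → D3) :
      ξ 2 (fun x => rps (x i) (x j)) x = ξ 2 rpsOp ![x i, x j] := by
    rw [hξ.map_rps hrps (hC.proj_mem i) (hC.proj_mem j), hξ.2.1, hξ.2.1]
  have rps_swap : (fun x : Fin 2 → D3 => rps (x 0) (x 1)) = fun x => rps (x 1) (x 0) :=
    funext fun x => rps_comm _ _
  exact (map_rps_proj 0 1 ![a, b]).symm.trans (rps_swap ▸ map_rps_proj 1 0 ![a, b])

lemma IsCloneHom.map_isRPSTerm (hξ : IsCloneHom C D ξ) (hC : IsClone C) (hrps : rpsOp ∈ C 2)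
    (hfix : ξ 2 rpsOp = rpsOp) {n : ℕ} {t : Op n} (ht : IsRPSTerm t) : ξ n t = t := by
  induction ht with
  | proj i => exact hξ.2.1 n i
  | rps hf hg ihf ihg =>
    rw [hξ.map_rps hrps (hf.mem hC hrps) (hg.mem hC hrps), hfix, ihf, ihg]
    rfl

theorem stmt0_general (hC : IsClone C) (hrps : rpsOp ∈ C 2)
    (hC3 : ∀ n, ∀ f ∈ C n, Preserves f C3rel) (hid : ∀ n, ∀ f ∈ C n, ∀ c, f (fun _ => c) = c)
    (hD : D 2 ⊆ Pol {⟨2, C3rel⟩, ⟨2, B2rel⟩} 2) (hξ : IsCloneHom C D ξ) {n : ℕ} {f : Op n}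
    (hf : f ∈ C n) : ξ n f = f := by
  have map_term {m : ℕ} {t : Op m} (ht : IsRPSTerm t) : ξ m t = t :=
    hξ.map_isRPSTerm hC hrps (hξ.map_rpsOp hC hrps hD) ht
  funext a
  choose t ht hterm apply_t _ using fun i => IsTernaryRPS.exists_isRPSTerm (a i) 0
  have map_comp : ξ 3 (fun x => f fun i => t i x) = fun x => ξ n f fun i => t i x := by
    simpa only [map_term (hterm _)] using hξ.2.2 n 3 f t hf fun i => (hterm i).mem hC hrps
  have comp_term : IsRPSTerm fun x => f fun i => t i x :=
    (IsTernaryRPS.comp (hC3 n f hf) (hid n f hf) ht).isRPSTerm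
  simpa only [apply_t] using congrFun (map_comp.symm.trans (map_term comp_term)) ![0, 1, 2]

end CloneHomomorphisms

/-- If `Pol({0,1,2}; C₃, R⁼₃) ⊆ Pol(𝔄) ⊆ Pol({0,1,2}; C₃, B₂)`, likewise for `𝔅`, and there is
a clone homomorphism from `Pol(𝔅)` to `Pol(𝔄)`, then `Pol(𝔅) ⊆ Pol(𝔄)`. -/
theorem stmt0 (A B : Set (Σ k : ℕ, Set (Fin k → D3)))
    (hA1 : ∀ n, Pol ({⟨2, C3rel⟩, ⟨3, Req3rel⟩} : Set (Σ k : ℕ, Set (Fin k → D3))) n ⊆ Pol A n)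
    (hA2 : ∀ n, Pol A n ⊆ Pol ({⟨2, C3rel⟩, ⟨2, B2rel⟩} : Set (Σ k : ℕ, Set (Fin k → D3))) n)
    (hB1 : ∀ n, Pol ({⟨2, C3rel⟩, ⟨3, Req3rel⟩} : Set (Σ k : ℕ, Set (Fin k → D3))) n ⊆ Pol B n)
    (hB2 : ∀ n, Pol B n ⊆ Pol ({⟨2, C3rel⟩, ⟨2, B2rel⟩} : Set (Σ k : ℕ, Set (Fin k → D3))) n)
    (hhom : ∃ ξ, IsCloneHom (Pol B) (Pol A) ξ) :
    ∀ n, Pol B n ⊆ Pol A n := by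
  obtain ⟨ξ, hξ⟩ := hhom
  exact fun n f hf => stmt0_general (isClone_Pol B) (hB1 2 rpsOp_mem_Pol)
    (fun n _ hg => (mem_Pol_pair.1 (hB2 n hg)).1)
    (fun n _ hg => (mem_Pol_pair.1 (hB2 n hg)).elim Preserves.apply_const)
    (hA2 2) hξ hf ▸ hξ.1 n f hf
end

section
/- Let 𝔔 = ({0,1,2}; C_3, R^=_2) and let 𝔓' be the structure with domain {0,1,2}^4 (tuples indexed x = (x_0,x_1,x_2,x_3)) and relations C_3^{P'} := {(x,y) : (x_0,y_0) ∈ C_3, x_1=y_2, x_2=y_3, x_3=y_1} and (R^=_2)^{P'} := {(x,y,z) : (x_1,x_2,x_3) ∈ B_3, (y_1,y_2,y_3) ∈ B_3, (z_1,z_2,z_3) ∈ B_3, x_3=0, x_0=x_2, (y_3,x_0) ∈ ≤_2, (z_3,x_0) ∈ ≤_2, (x_0,y_2,z_2) ∈ R^⇒_2, (x_0,z_2,y_2) ∈ R^⇒_2}. Then the map g with g(0)=(0,1,0,0), g(1)=(1,0,1,0), g(2)=(2,0,0,1) is a homomorphism from 𝔔 to 𝔓', and the map h with h(x_0,x_1,x_2,x_3)=0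 if (x_1,x_2,x_3)∈{(1,0,0),(1,0,1)}, =1 if (x_1,x_2,x_3)∈{(0,1,0),(1,1,0)}, =2 if (x_1,x_2,x_3)∈{(0,0,1),(0,1,1)}, and =x_0 otherwise, is a homomorphism from 𝔓' to 𝔔. In particular 𝔔 and 𝔓' are homomorphically equivalent. -/
/-- `C₃ = {(0,1),(1,2),(2,0)}`. -/
def C3P (a b : D3) : Prop := (a = 0 ∧ b = 1) ∨ (a = 1 ∧ b = 2) ∨ (a = 2 ∧ b = 0)

/-- `≤₂ = {(0,0),(0,1),(1,1)}`. -/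
def le2P (a b : D3) : Prop := (a = 0 ∧ b = 0) ∨ (a = 0 ∧ b = 1) ∨ (a = 1 ∧ b = 1)

/-- `B₃ = {0,1}³ \ {(0,0,0)}`. -/
def B3P (a b c : D3) : Prop :=
  (a = 0 ∨ a = 1) ∧ (b = 0 ∨ b = 1) ∧ (c = 0 ∨ c = 1) ∧ ¬(a = 0 ∧ b = 0 ∧ c = 0)

/-- `R⁼₂ = {(x,y,z) : x ∈ {0,1} ∧ (x = 0 → y = z ∈ {0,1})}`. -/
def Req2P (a b c : D3) : Prop := (a = 0 ∨ a = 1) ∧ (a = 0 → b = c ∧ (b = 0 ∨ b = 1))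

/-- `R⇒₂ = {(x,y,z) : x,y ∈ {0,1} ∧ (x = y = 0 → z = 0)}`. -/
def Rimp2P (a b c : D3) : Prop :=
  (a = 0 ∨ a = 1) ∧ (b = 0 ∨ b = 1) ∧ (a = 0 → b = 0 → c = 0)

/-- The relation `C₃^{𝔓'}` on `{0,1,2}⁴`. -/
def C3P' (x y : Fin 4 → D3) : Prop :=
  C3P (x 0) (y 0) ∧ x 1 = y 2 ∧ x 2 = y 3 ∧ x 3 = y 1

/-- The relation `(R⁼₂)^{𝔓'}` on `{0,1,2}⁴`. -/
def Req2P' (x y z : Fin 4 → D3) : Prop :=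
  B3P (x 1) (x 2) (x 3) ∧ B3P (y 1) (y 2) (y 3) ∧ B3P (z 1) (z 2) (z 3) ∧
  x 3 = 0 ∧ x 0 = x 2 ∧ le2P (y 3) (x 0) ∧ le2P (z 3) (x 0) ∧
  Rimp2P (x 0) (y 2) (z 2) ∧ Rimp2P (x 0) (z 2) (y 2)

/-- The map `g` with `g(0) = (0,1,0,0)`, `g(1) = (1,0,1,0)`, `g(2) = (2,0,0,1)`. -/
def gMap : D3 → Fin 4 → D3 := ![![0,1,0,0], ![1,0,1,0], ![2,0,0,1]]

/-- The map `h`. -/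
def hMap (x : Fin 4 → D3) : D3 :=
  if (x 1, x 2, x 3) = ((1 : D3), (0 : D3), (0 : D3)) ∨
     (x 1, x 2, x 3) = ((1 : D3), (0 : D3), (1 : D3)) then 0
  else if (x 1, x 2, x 3) = ((0 : D3), (1 : D3), (0 : D3)) ∨
          (x 1, x 2, x 3) = ((1 : D3), (1 : D3), (0 : D3)) then 1
  else if (x 1, x 2, x 3) = ((0 : D3), (0 : D3), (1 : D3)) ∨
          (x 1, x 2, x 3) = ((0 : D3), (1 : D3), (1 : D3)) then 2
  else x 0

/-- `g` is a homomorphism from `𝔔 = ({0,1,2}; C₃, R⁼₂)` to `𝔓'`. -/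
def IsHomQtoP' (g : D3 → Fin 4 → D3) : Prop :=
  (∀ a b : D3, C3P a b → C3P' (g a) (g b)) ∧
  (∀ a b c : D3, Req2P a b c → Req2P' (g a) (g b) (g c))

/-- `h` is a homomorphism from `𝔓'` to `𝔔`. -/
def IsHomP'toQ (h : (Fin 4 → D3) → D3) : Prop :=
  (∀ x y : Fin 4 → D3, C3P' x y → C3P (h x) (h y)) ∧
  (∀ x y z : Fin 4 → D3, Req2P' x y z → Req2P (h x) (h y) (h z))

/-!
`gMap a` is `a` followed by the indicator word of `a`. Conversely, a nonconstant word of length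
three over `{0,1}`, read cyclically, has exactly one descent `10`, and `hMap` reads off its
position. Since `C3P a b` says `b = a + 1` modulo three, while `C3P'` adds one to the zeroth
coordinate and rotates the word by one letter, both maps respect these relations.
For the other pair of relations, a nonzero word with `x 3 = 0` has its descent at position `x 2`.
In `Req2P'` this applies to `x`, where `x 2 = x 0`, and if `x 0 = 0` also to `y` and `z`, where
then `y 2 = z 2`.
-/

theorem C3P_iff_eq_add_one {a b : D3} : C3P a b ↔ b = a + 1 := by
  unfold C3P
  revert a b
  decide

theorem C3P'_iff {x y : Fin 4 → D3} :
    C3P' x y ↔ y 0 = x 0 + 1 ∧ ∀ i : Fin 3, y (i + 1).succ = x i.succ := by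
  simp only [C3P', C3P_iff_eq_add_one, Fin.forall_fin_succ, IsEmpty.forall_iff, and_true]
  exact and_congr_right fun _ => and_congr eq_comm (and_congr eq_comm eq_comm)

theorem gMap_apply_zero (a : D3) : gMap a 0 = a := by
  revert a
  decide

theorem gMap_apply_succ (a i : D3) : gMap a i.succ = if i = a then 1 else 0 := by
  revert a i
  decide

theorem C3P'_gMap {a b : D3} (hab : C3P a b) : C3P' (gMap a) (gMap b) := by
  obtain rfl := C3P_iff_eq_add_one.mp hab
  refine C3P'_iff.mpr ⟨by simp only [gMap_apply_zero], fun i => ?_⟩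
  simp only [gMap_apply_succ, add_left_inj]

theorem B3P_gMap (a : D3) : B3P (gMap a 1) (gMap a 2) (gMap a 3) := by
  unfold B3P
  revert a
  decide

theorem gMap_apply_two_eq_zero_or_one (a : D3) : gMap a 2 = 0 ∨ gMap a 2 = 1 :=
  (B3P_gMap a).2.1

theorem gMap_apply_three_eq_zero_or_one (a : D3) : gMap a 3 = 0 ∨ gMap a 3 = 1 :=
  (B3P_gMap a).2.2.1

theorem gMap_apply_two_eq_self {a : D3} (ha : a = 0 ∨ a = 1) : gMap a 2 = a := by
  rcases ha with rfl | rfl <;> rfl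

theorem gMap_apply_three_eq_zero {a : D3} (ha : a = 0 ∨ a = 1) : gMap a 3 = 0 := by
  rcases ha with rfl | rfl <;> rfl

theorem le2P_iff {a b : D3} :
    le2P a b ↔ (a = 0 ∨ a = 1) ∧ (b = 0 ∨ b = 1) ∧ (b = 0 → a = 0) := by
  unfold le2P
  revert a b
  decide

theorem Req2P'_gMap {a b c : D3} (h : Req2P a b c) : Req2P' (gMap a) (gMap b) (gMap c) := by
  obtain ⟨ha, hbc⟩ := h
  have hb_three : a = 0 → gMap b 3 = 0 := fun h0 =>
    gMap_apply_three_eq_zero (hbc h0).2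
  have hc_three : a = 0 → gMap c 3 = 0 := fun h0 => (hbc h0).1 ▸ hb_three h0
  have htwo : a = 0 → gMap b 2 = gMap c 2 := fun h0 => (hbc h0).1 ▸ rfl
  refine ⟨B3P_gMap a, B3P_gMap b, B3P_gMap c, gMap_apply_three_eq_zero ha, ?_⟩
  rw [gMap_apply_zero]
  exact ⟨(gMap_apply_two_eq_self ha).symm,
    le2P_iff.mpr ⟨gMap_apply_three_eq_zero_or_one b, ha, hb_three⟩,
    le2P_iff.mpr ⟨gMap_apply_three_eq_zero_or_one c, ha, hc_three⟩,
    ⟨ha, gMap_apply_two_eq_zero_or_one b, fun h0 hb => (htwo h0).symm.trans hb⟩,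
    ⟨ha, gMap_apply_two_eq_zero_or_one c, fun h0 hc => (htwo h0).trans hc⟩⟩

theorem isHomQtoP'_gMap : IsHomQtoP' gMap :=
  ⟨fun _ _ => C3P'_gMap, fun _ _ _ => Req2P'_gMap⟩

/-- The word `x 1, x 2, x 3` has all its letters in `{0,1}` and, read cyclically, a descent `10`
starting at its letter number `i`, counted from zero. This is the condition under which `hMap`
takes the value `i` without falling back to `x 0`. -/
def DescentAt (x : Fin 4 → D3) (i : D3) : Prop :=
  x i.succ = 1 ∧ x (i + 1).succ = 0 ∧ (x (i + 2).succ = 0 ∨ x (i + 2).succ = 1)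

theorem hMap_eq_of_descentAt {x : Fin 4 → D3} {i : D3} (h : DescentAt x i) : hMap x = i := by
  obtain ⟨h_one, h_zero, h_third⟩ := h
  fin_cases i <;> rcases h_third with h_third | h_third <;> simp_all [hMap]

theorem hMap_eq_apply_zero_of_forall_not_descentAt {x : Fin 4 → D3} (h : ∀ i, ¬DescentAt x i) :
    hMap x = x 0 := by
  simp only [hMap, Prod.mk.injEq]
  split_ifs with h0 h1 h2
  · rcases h0 with ⟨hx1, hx2, hx3⟩ | ⟨hx1, hx2, hx3⟩
    exacts [absurd ⟨hx1, hx2, .inl hx3⟩ (h 0), absurd ⟨hx1, hx2, .inr hx3⟩ (h 0)]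
  · rcases h1 with ⟨hx1, hx2, hx3⟩ | ⟨hx1, hx2, hx3⟩
    exacts [absurd ⟨hx2, hx3, .inl hx1⟩ (h 1), absurd ⟨hx2, hx3, .inr hx1⟩ (h 1)]
  · rcases h2 with ⟨hx1, hx2, hx3⟩ | ⟨hx1, hx2, hx3⟩
    exacts [absurd ⟨hx3, hx1, .inl hx2⟩ (h 2), absurd ⟨hx3, hx1, .inr hx2⟩ (h 2)]
  · rfl

theorem descentAt_add_one_iff {x y : Fin 4 → D3} (hxy : C3P' x y) (i : D3) :
    DescentAt y (i + 1) ↔ DescentAt x i := by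
  have hshift := (C3P'_iff.mp hxy).2
  simp only [DescentAt, add_right_comm i 1, hshift]

theorem C3P_hMap {x y : Fin 4 → D3} (hxy : C3P' x y) : C3P (hMap x) (hMap y) := by
  rw [C3P_iff_eq_add_one]
  by_cases hx : ∃ i, DescentAt x i
  · obtain ⟨i, hi⟩ := hx
    rw [hMap_eq_of_descentAt hi, hMap_eq_of_descentAt ((descentAt_add_one_iff hxy i).mpr hi)]
  · have hx_none : ∀ i, ¬DescentAt x i := not_exists.mp hx
    have hy_none : ∀ i, ¬DescentAt y i := fun i hi =>
      hx_none (i - 1) ((descentAt_add_one_iff hxy (i - 1)).mp (by rwa [sub_add_cancel]))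
    rw [hMap_eq_apply_zero_of_forall_not_descentAt hx_none,
      hMap_eq_apply_zero_of_forall_not_descentAt hy_none]
    exact (C3P'_iff.mp hxy).1

theorem hMap_eq_apply_two_of_apply_three_eq_zero {x : Fin 4 → D3} (hx : B3P (x 1) (x 2) (x 3))
    (h3 : x 3 = 0) : hMap x = x 2 := by
  obtain ⟨h1, h2, -, hne⟩ := hx
  rcases h2 with h2 | h2
  · have h1' : x 1 = 1 := h1.resolve_left fun h => hne ⟨h, h2, h3⟩
    exact (hMap_eq_of_descentAt (i := 0) ⟨h1', h2, .inl h3⟩).trans h2.symm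
  · exact (hMap_eq_of_descentAt (i := 1) ⟨h2, h3, h1⟩).trans h2.symm

theorem Req2P_hMap {x y z : Fin 4 → D3} (h : Req2P' x y z) :
    Req2P (hMap x) (hMap y) (hMap z) := by
  obtain ⟨hx, hy, hz, hx3, hx02, hy3, hz3, hyz, hzy⟩ := h
  have hx_val : hMap x = x 0 := (hMap_eq_apply_two_of_apply_three_eq_zero hx hx3).trans hx02.symm
  rw [hx_val]
  refine ⟨hyz.1, fun hx0 => ?_⟩
  have hy_val : hMap y = y 2 :=
    hMap_eq_apply_two_of_apply_three_eq_zero hy ((le2P_iff.mp hy3).2.2 hx0)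
  have hz_val : hMap z = z 2 :=
    hMap_eq_apply_two_of_apply_three_eq_zero hz ((le2P_iff.mp hz3).2.2 hx0)
  have hy2 : y 2 = 0 ∨ y 2 = 1 := hyz.2.1
  have hz2 : z 2 = 0 ∨ z 2 = 1 := hzy.2.1
  have hzero_iff : y 2 = 0 ↔ z 2 = 0 := ⟨hyz.2.2 hx0, hzy.2.2 hx0⟩
  have hyz2 : y 2 = z 2 := by grind
  rw [hy_val, hz_val]
  exact ⟨hyz2, hy2⟩

theorem isHomP'toQ_hMap : IsHomP'toQ hMap :=
  ⟨fun _ _ => C3P_hMap, fun _ _ _ => Req2P_hMap⟩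

theorem stmt2 :
    IsHomQtoP' gMap ∧ IsHomP'toQ hMap ∧
    (∃ (g : D3 → Fin 4 → D3) (h : (Fin 4 → D3) → D3), IsHomQtoP' g ∧ IsHomP'toQ h) :=
  ⟨isHomQtoP'_gMap, isHomP'toQ_hMap, gMap, hMap, isHomQtoP'_gMap, isHomP'toQ_hMap⟩
end
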